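/- arXiv:2511.07949 — 8 statements merged into one kernel-verified Lean document; each statement's English description precedes it below -/
import Mathlib

section
/- Let Π₀,…,Π_d be pairwise orthogonal orthogonal-projection matrices on ℂ^N with Π₀+⋯+Π_d = I, and let H₁ be an N×N Hermitian matrix. Then the following are equivalent: (i) for every n ∈ {1,…,d} and every density matrix ρ with Tr(Π_n ρ) = 1 one has H₁ρ ≠ ρH₁; (ii) for every j ∈ {1,…,d}, every λ ∈ ℂ, and every vector v in the range of Π_j satisfying Π_j H₁ Π_j v = λ v and Π_i H₁ Π_j v = 0 for all i ≠ j, one has v = 0. -/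
open Matrix
open scoped ComplexOrder

theorem aux_eig {N : ℕ} (ρ H : Matrix (Fin N) (Fin N) ℂ) (hρ : ρ ≠ 0) (hc : H * ρ = ρ * H) :
    ∃ (lam : ℂ) (w : Fin N → ℂ), ρ.mulVec w ≠ 0 ∧ H.mulVec (ρ.mulVec w) = lam • ρ.mulVec w := by
  let R := LinearMap.range ρ.mulVecLin
  have hinv : ∀ x ∈ R, H.mulVecLin x ∈ R := by
    rintro x ⟨y, rfl⟩
    refine ⟨H.mulVec y, ?_⟩
    simp only [mulVecLin_apply, mulVec_mulVec, hc]
  have hR : Nontrivial R := by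
    rw [Submodule.nontrivial_iff_ne_bot]
    intro h
    apply hρ
    have h2 : ρ.mulVecLin = 0 := LinearMap.range_eq_bot.mp h
    ext i j
    have h3 := congrFun (LinearMap.congr_fun h2 (Pi.single j 1)) i
    simpa using h3
  obtain ⟨c, hcE⟩ := Module.End.exists_eigenvalue (H.mulVecLin.restrict hinv)
  obtain ⟨⟨x, y, rfl⟩, hx⟩ := hcE.exists_hasEigenvector
  refine ⟨c, y, ?_, ?_⟩
  · intro h
    apply hx.2
    ext1
    exact h
  · exact congrArg Subtype.val hx.apply_eq_smul

theorem aux_supp {N : ℕ} (ρ P : Matrix (Fin N) (Fin N) ℂ) (hP : P.IsHermitian) (hI : P * P = P)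
    (hρ : ρ.PosSemidef) (h1 : ρ.trace = 1) (h2 : (P * ρ).trace = 1) : P * ρ = ρ := by
  set Q := 1 - P with hQ
  have hQH : Qᴴ = Q := by simp [hQ, hP.eq]
  have hQI : Q * Q = Q := by simp [hQ, mul_sub, sub_mul, hI]
  have h3 : (Q * ρ * Q).trace = 0 := by
    rw [trace_mul_comm, ← mul_assoc, hQI, hQ, sub_mul, trace_sub, one_mul, h1, h2, sub_self]
  have h4 : (Q * ρ * Qᴴ).PosSemidef := hρ.mul_mul_conjTranspose_same Q
  rw [hQH] at h4
  have h5 : Q * ρ * Q = 0 := h4.trace_eq_zero_iff.mp h3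
  obtain ⟨B, rfl⟩ : ∃ B, ρ = Bᴴ * B := by
    open scoped MatrixOrder in
    exact CStarAlgebra.nonneg_iff_eq_star_mul_self.mp hρ.nonneg
  have h6 : (B * Q)ᴴ * (B * Q) = 0 := by
    rw [conjTranspose_mul, hQH, ← h5]; simp only [mul_assoc]
  have h7 : B * Q = 0 := conjTranspose_mul_self_eq_zero.mp h6
  have h8 : Q * Bᴴ = 0 := by rw [← hQH, ← conjTranspose_mul, h7, conjTranspose_zero]
  have h9 : Q * (Bᴴ * B) = 0 := by rw [← mul_assoc, h8, zero_mul]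
  rw [hQ, sub_mul, one_mul, sub_eq_zero] at h9
  exact h9.symm

/-- Equivalence between the non-commutation of the control Hamiltonian with every
density matrix supported in a non-target subspace, and the Hautus-type condition A6. -/
theorem stmt0 {N d : ℕ} (P : Fin (d + 1) → Matrix (Fin N) (Fin N) ℂ)
    (hHerm : ∀ i, (P i).IsHermitian)
    (hIdem : ∀ i, P i * P i = P i)
    (hOrth : ∀ i j, i ≠ j → P i * P j = 0)
    (hSum : ∑ i, P i = 1)
    (H₁ : Matrix (Fin N) (Fin N) ℂ) (hH₁ : H₁.IsHermitian) :
    (∀ n : Fin (d + 1), n ≠ 0 →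
      ∀ ρ : Matrix (Fin N) (Fin N) ℂ, ρ.PosSemidef → ρ.trace = 1 →
        (P n * ρ).trace = 1 → H₁ * ρ ≠ ρ * H₁) ↔
    (∀ j : Fin (d + 1), j ≠ 0 → ∀ (lam : ℂ) (v : Fin N → ℂ),
      (P j).mulVec v = v →
      (P j * H₁ * P j).mulVec v = lam • v →
      (∀ i, i ≠ j → (P i * H₁ * P j).mulVec v = 0) →
      v = 0) := by
  constructor
  · intro h j hj lam v hv hE h0
    by_contra hne
    have hHv : H₁ *ᵥ v = lam • v := by
      calc H₁ *ᵥ v = ((∑ i, P i) * H₁ * P j) *ᵥ v := by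
            rw [hSum, one_mul, ← mulVec_mulVec, hv]
        _ = ∑ i, (P i * H₁ * P j) *ᵥ v := by
            rw [Finset.sum_mul, Finset.sum_mul, sum_mulVec]
        _ = lam • v := by
            rw [Finset.sum_eq_single j (fun i _ hi => h0 i hi) (by simp), hE]
    have hs : star v ⬝ᵥ v ≠ 0 := fun hh => hne (dotProduct_star_self_eq_zero.mp hh)
    have hvH : star v ᵥ* H₁ = star lam • star v := by
      have := congrArg star hHv
      rwa [star_mulVec, hH₁.eq, star_smul] at this
    have hreal : star lam = lam := by
      have e : (star v ᵥ* H₁) ⬝ᵥ v = star v ⬝ᵥ (H₁ *ᵥ v) := (dotProduct_mulVec _ _ _).symm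
      rw [hvH, hHv, smul_dotProduct, dotProduct_smul, smul_eq_mul, smul_eq_mul] at e
      exact mul_right_cancel₀ hs e
    have htr : (vecMulVec v (star v)).trace = star v ⬝ᵥ v := by
      rw [trace_vecMulVec, dotProduct_comm]
    have hpos : 0 ≤ (star v ⬝ᵥ v)⁻¹ := by
      have : 0 ≤ star v ⬝ᵥ v := dotProduct_star_self_nonneg v
      exact inv_nonneg.mpr this
    refine h j hj ((star v ⬝ᵥ v)⁻¹ • vecMulVec v (star v)) ?_ ?_ ?_ ?_
    · exact (posSemidef_vecMulVec_self_star v).smul hpos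
    · rw [trace_smul, htr, smul_eq_mul, inv_mul_cancel₀ hs]
    · rw [mul_smul_comm, mul_vecMulVec, hv, trace_smul, htr, smul_eq_mul, inv_mul_cancel₀ hs]
    · rw [mul_smul_comm, smul_mul_assoc, mul_vecMulVec, vecMulVec_mul, hHv, hvH, hreal,
        smul_vecMulVec, vecMulVec_smul]
  · intro h n hn ρ hρ h1 h2 hc
    have hs := aux_supp ρ (P n) (hHerm n) (hIdem n) hρ h1 h2
    have hne : ρ ≠ 0 := by rintro rfl; simp at h1
    obtain ⟨lam, w, hw, hE⟩ := aux_eig ρ H₁ hne hc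
    have hv : P n *ᵥ (ρ *ᵥ w) = ρ *ᵥ w := by rw [mulVec_mulVec, hs]
    refine hw (h n hn lam _ hv ?_ ?_)
    · rw [← mulVec_mulVec, hv, ← mulVec_mulVec, hE, mulVec_smul, hv]
    · intro i hi
      rw [← mulVec_mulVec, hv, ← mulVec_mulVec, hE, mulVec_smul, ← hv, mulVec_mulVec, hOrth i n hi,
        zero_mulVec, smul_zero]
end

section
/- Let l̲, l̄, l₀ ∈ ℝ with 0 ≤ l̲ ≤ l̄, and let 0 < χ̲ ≤ χ̄. Define A := l̲² · min{χ̲², 1} and B := 2 l̄ |l₀| · max{1−χ̲, χ̄−1}. Assume condition C3: if l₀ = 0 then l̲ > 0, and if l₀ ≠ 0 then A > B. Then A − B > 0, and for every χ ∈ [χ̲, χ̄] one has l̲² · min{χ², 1} − 2 l̄ |(χ−1) l₀| ≥ A − B. -/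
/-- Algebraic content of Lemma 4 (Lem:Stable_positivity): under condition C3 the
drift coefficient stays bounded below by `A - B > 0` uniformly in `χ ∈ [χmin, χmax]`. -/
theorem stmt2 (lmin lmax l0 : ℝ) (hl0 : 0 ≤ lmin) (hll : lmin ≤ lmax)
    (χmin χmax : ℝ) (hχ0 : 0 < χmin) (hχχ : χmin ≤ χmax)
    (A B : ℝ)
    (hA : A = lmin ^ 2 * min (χmin ^ 2) 1)
    (hB : B = 2 * lmax * |l0| * max (1 - χmin) (χmax - 1))
    (hC3 : (l0 = 0 → 0 < lmin) ∧ (l0 ≠ 0 → B < A)) :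
    0 < A - B ∧
      ∀ χ : ℝ, χmin ≤ χ → χ ≤ χmax →
        A - B ≤ lmin ^ 2 * min (χ ^ 2) 1 - 2 * lmax * |(χ - 1) * l0| := by
  constructor
  · by_cases h : l0 = 0
    · have h1 := hC3.1 h
      have h2 : 0 < lmin ^ 2 * min (χmin ^ 2) 1 :=
        mul_pos (by positivity) (lt_min (by positivity) one_pos)
      have h3 : B = 0 := by rw [hB, h]; simp
      linarith
    · linarith [hC3.2 h]
  · intro χ h1 h2
    have h3 : lmin ^ 2 * min (χmin ^ 2) 1 ≤ lmin ^ 2 * min (χ ^ 2) 1 :=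
      mul_le_mul_of_nonneg_left
        (min_le_min_right 1 (pow_le_pow_left₀ hχ0.le h1 2)) (sq_nonneg _)
    have h4 : |χ - 1| ≤ max (1 - χmin) (χmax - 1) := by
      rw [abs_le]
      constructor
      · linarith [le_max_left (1 - χmin) (χmax - 1)]
      · linarith [le_max_right (1 - χmin) (χmax - 1)]
    have h5 : 0 ≤ 2 * lmax * |l0| :=
      mul_nonneg (by linarith) (abs_nonneg _)
    have h6 := mul_le_mul_of_nonneg_left h4 h5
    have h7 : 2 * lmax * |(χ - 1) * l0| = 2 * lmax * |l0| * |χ - 1| := by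
      rw [abs_mul]; ring
    rw [h7, hA, hB]
    linarith
end

section
/- Let Π₀ be an orthogonal-projection matrix on ℂ^N of rank r, let Π₀^⊥ = I − Π₀, let H₁ be an N×N Hermitian matrix, and set A := Π₀^⊥ H₁ Π₀^⊥ and B := Π₀^⊥ H₁ Π₀. Let ρ be an N×N positive semidefinite Hermitian matrix with Tr(ρ Π₀) = 0 and ρ Aⁱ B = 0 for all i = 0,…,n. If the rank of the block matrix [B, AB, …, AⁿB] is at least N − 1 − r, then rank(ρ) ≤ 1. -/
open Matrix
open scoped ComplexOrder

section
open scoped MatrixOrder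
theorem psd_factor {N : ℕ} (ρ : Matrix (Fin N) (Fin N) ℂ) (hρ : ρ.PosSemidef) :
    ∃ C : Matrix (Fin N) (Fin N) ℂ, ρ = Cᴴ * C :=
  CStarAlgebra.nonneg_iff_eq_star_mul_self.mp hρ.nonneg
end

/-- Core linear-algebraic claim in the proof of Lemma 3: a positive semidefinite
matrix annihilating the target subspace and the Kalman-type column space
`[B, AB, …, AⁿB]` of rank at least `N - 1 - r` has rank at most one. -/
theorem stmt3 {N n : ℕ} (P0 : Matrix (Fin N) (Fin N) ℂ)
    (hHerm : P0.IsHermitian) (hIdem : P0 * P0 = P0)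
    (r : ℕ) (hr : P0.rank = r)
    (H₁ : Matrix (Fin N) (Fin N) ℂ) (hH₁ : H₁.IsHermitian)
    (A B : Matrix (Fin N) (Fin N) ℂ)
    (hA : A = (1 - P0) * H₁ * (1 - P0))
    (hB : B = (1 - P0) * H₁ * P0)
    (ρ : Matrix (Fin N) (Fin N) ℂ) (hρ : ρ.PosSemidef)
    (htr : (ρ * P0).trace = 0)
    (hAnn : ∀ i : Fin (n + 1), ρ * (A ^ (i : ℕ) * B) = 0)
    (hrank : N - 1 - r ≤
      (Matrix.of fun (i : Fin N) (p : Fin (n + 1) × Fin N) =>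
        (A ^ (p.1 : ℕ) * B) i p.2).rank) :
    ρ.rank ≤ 1 := by
  have hPQ : P0 * (1 - P0) = 0 := by rw [mul_sub, mul_one, hIdem, sub_self]
  have hPA : P0 * A = 0 := by rw [hA, mul_assoc, ← mul_assoc, hPQ, zero_mul]
  have hPB : P0 * B = 0 := by rw [hB, mul_assoc, ← mul_assoc, hPQ, zero_mul]
  have hPAB : ∀ i : ℕ, P0 * (A ^ i * B) = 0 := by
    intro i
    cases i with
    | zero => simpa using hPB
    | succ k => rw [pow_succ', mul_assoc, ← mul_assoc, hPA, zero_mul]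
  have hρP : ρ * P0 = 0 := by
    obtain ⟨C, hC⟩ : ∃ C : Matrix (Fin N) (Fin N) ℂ, ρ = Cᴴ * C :=
      psd_factor ρ hρ
    have h1 : ((C * P0)ᴴ * (C * P0)).trace = 0 := by
      rw [Matrix.conjTranspose_mul, hHerm.eq, mul_assoc, Matrix.trace_mul_comm, ← htr, hC]
      congr 1
      simp only [mul_assoc, hIdem]
    have h2 : C * P0 = 0 := Matrix.trace_conjTranspose_mul_self_eq_zero_iff.mp h1
    rw [hC, mul_assoc, h2, mul_zero]
  set K : Matrix (Fin N) (Fin (n + 1) × Fin N) ℂ :=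
    Matrix.of fun (i : Fin N) (p : Fin (n + 1) × Fin N) => (A ^ (p.1 : ℕ) * B) i p.2 with hK
  have hmulK : ∀ M : Matrix (Fin N) (Fin N) ℂ,
      (∀ i : Fin (n + 1), M * (A ^ (i : ℕ) * B) = 0) → M * K = 0 := by
    intro M hM
    ext i p
    have := congrFun (congrFun (hM p.1) i) p.2
    rw [Matrix.mul_apply] at this ⊢
    exact this
  have hρK : ρ * K = 0 := hmulK ρ hAnn
  have hPK : P0 * K = 0 := hmulK P0 fun i => hPAB i
  have hdisj : LinearMap.range K.mulVecLin ⊓ LinearMap.range P0.mulVecLin = ⊥ := by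
    rw [eq_bot_iff]
    rintro x ⟨⟨y, hy⟩, ⟨z, hz⟩⟩
    simp only [Matrix.mulVecLin_apply] at hy hz
    have h1 : P0 *ᵥ x = 0 := by rw [← hy, Matrix.mulVec_mulVec, hPK, Matrix.zero_mulVec]
    have h2 : P0 *ᵥ x = x := by rw [← hz, Matrix.mulVec_mulVec, hIdem]
    rw [Submodule.mem_bot, ← h2, h1]
  have hle : LinearMap.range K.mulVecLin ⊔ LinearMap.range P0.mulVecLin
      ≤ LinearMap.ker ρ.mulVecLin := by
    apply sup_le
    · rintro x ⟨y, rfl⟩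
      simp [Matrix.mulVec_mulVec, hρK]
    · rintro x ⟨y, rfl⟩
      simp [Matrix.mulVec_mulVec, hρP]
  have h1 := Submodule.finrank_sup_add_finrank_inf_eq
    (LinearMap.range K.mulVecLin) (LinearMap.range P0.mulVecLin)
  have h2 := Submodule.finrank_mono hle
  have h3 := LinearMap.finrank_range_add_finrank_ker ρ.mulVecLin
  rw [hdisj, finrank_bot] at h1
  rw [Module.finrank_fin_fun] at h3
  unfold Matrix.rank at hr hrank ⊢
  omega
end

section
/- Let d ≥ 1, m ≥ 1, and for each k ∈ {1,…,m} let l_{k,0},…,l_{k,d} ∈ ℝ. Assume (A5): for each k, either l_{k,0} ≤ l_{k,n} for all n ∈ {1,…,d}, or l_{k,0} ≥ l_{k,n} for all n ∈ {1,…,d}. Assume also that for every n ∈ {1,…,d} there exists k with l_{k,0} ≠ l_{k,n}. Then a probability vector p ∈ ℝ^{d+1} satisfies Σ_{j=0}^d l_{k,j} p_j = l_{k,0} for all k ∈ {1,…,m} if and only if p₀ = 1 (equivalently p = e₀). -/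
/-- Under assumptions A3 and A5, the common zero set within the simplex of the
functions `Ψ^k₀(p) = l_{k,0} − Σ_j l_{k,j} p_j` is the vertex `e₀`. -/
theorem stmt8 {d m : ℕ} (hd : 1 ≤ d) (hm : 1 ≤ m)
    (l : Fin m → Fin (d + 1) → ℝ)
    (hA5 : ∀ k, (∀ n : Fin d, l k 0 ≤ l k n.succ) ∨ (∀ n : Fin d, l k n.succ ≤ l k 0))
    (hA3 : ∀ n : Fin d, ∃ k, l k 0 ≠ l k n.succ)
    (p : Fin (d + 1) → ℝ) (hp0 : ∀ j, 0 ≤ p j) (hp1 : ∑ j, p j = 1) :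
    (∀ k, ∑ j, l k j * p j = l k 0) ↔ p 0 = 1 := by
  rw [Fin.sum_univ_succ] at hp1
  have key : ∀ k, ∑ j, l k j * p j - l k 0 = ∑ n : Fin d, (l k n.succ - l k 0) * p n.succ := by
    intro k
    have h0 : p 0 = 1 - ∑ n : Fin d, p n.succ := by linarith
    rw [Fin.sum_univ_succ, h0]
    simp only [sub_mul, Finset.sum_sub_distrib, ← Finset.mul_sum]
    ring
  constructor
  · intro h
    have hz : ∀ n : Fin d, p n.succ = 0 := by
      intro n
      obtain ⟨k, hk⟩ := hA3 n
      have hs : ∑ n : Fin d, (l k n.succ - l k 0) * p n.succ = 0 := by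
        rw [← key k, h k, sub_self]
      have ht : (l k n.succ - l k 0) * p n.succ = 0 := by
        rcases hA5 k with h5 | h5
        · exact (Finset.sum_eq_zero_iff_of_nonneg (fun i _ =>
            mul_nonneg (sub_nonneg.2 (h5 i)) (hp0 _))).1 hs n (Finset.mem_univ n)
        · exact (Finset.sum_eq_zero_iff_of_nonpos (fun i _ =>
            mul_nonpos_of_nonpos_of_nonneg (sub_nonpos.2 (h5 i)) (hp0 _))).1 hs n
              (Finset.mem_univ n)
      rcases mul_eq_zero.1 ht with h1 | h1
      · exact absurd (sub_eq_zero.1 h1).symm hk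
      · exact h1
    simpa [hz] using hp1
  · intro h k
    have hs : ∑ n : Fin d, p n.succ = 0 := by linarith
    have hz := (Finset.sum_eq_zero_iff_of_nonneg (fun (i : Fin d) _ => hp0 i.succ)).1 hs
    have hk := key k
    have h2 : ∑ n : Fin d, (l k n.succ - l k 0) * p n.succ = 0 :=
      Finset.sum_eq_zero (fun i hi => by rw [hz i hi, mul_zero])
    linarith
end

section
/- Let ρ be a density matrix on ℂ^N and Π₀ an orthogonal-projection matrix on ℂ^N. Then, with ‖·‖ the Hilbert–Schmidt (Frobenius) norm, ‖ρ − Π₀ρΠ₀‖² ≤ 3 (1 − Tr(ρΠ₀)). -/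
open Matrix
open scoped ComplexOrder

lemma frob_sq {N : ℕ} (A : Matrix (Fin N) (Fin N) ℂ) :
    (A * Aᴴ).trace.re = ∑ i, ∑ j, ‖A i j‖ ^ 2 := by
  simp only [Matrix.trace, Matrix.diag, Matrix.mul_apply, Complex.re_sum,
    Matrix.conjTranspose_apply]
  refine Finset.sum_congr rfl fun i _ => Finset.sum_congr rfl fun j _ => ?_
  rw [← Complex.normSq_eq_norm_sq, Complex.normSq_apply]
  simp

section
attribute [local instance] Matrix.frobeniusNormedAddCommGroup

lemma frob_sq_norm {N : ℕ} (A : Matrix (Fin N) (Fin N) ℂ) :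
    (A * Aᴴ).trace.re = ‖A‖ ^ 2 := by
  rw [frob_sq, Matrix.frobenius_norm_def, ← Real.sqrt_eq_rpow, Real.sq_sqrt]
  · simp
  · positivity

lemma frob_mul {N : ℕ} (A B : Matrix (Fin N) (Fin N) ℂ) :
    ((A * B) * (A * B)ᴴ).trace.re ≤ (A * Aᴴ).trace.re * (B * Bᴴ).trace.re := by
  rw [frob_sq_norm, frob_sq_norm, frob_sq_norm, ← mul_pow]
  exact pow_le_pow_left₀ (norm_nonneg _) (Matrix.frobenius_norm_mul A B) 2

end

lemma frob_nonneg {N : ℕ} (A : Matrix (Fin N) (Fin N) ℂ) : 0 ≤ (A * Aᴴ).trace.re := by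
  rw [frob_sq]; positivity

/-- The Hilbert–Schmidt distance to the target block satisfies
`‖ρ − Π₀ρΠ₀‖² ≤ 3(1 − Tr(ρΠ₀))`; here the squared Hilbert–Schmidt (Frobenius)
norm of `M` is written as `Re Tr(M Mᴴ)`. -/
theorem stmt11 {N : ℕ} (ρ P0 : Matrix (Fin N) (Fin N) ℂ)
    (hρ : ρ.PosSemidef) (htr : ρ.trace = 1)
    (hHerm : P0.IsHermitian) (hIdem : P0 * P0 = P0) :
    ((ρ - P0 * ρ * P0) * (ρ - P0 * ρ * P0)ᴴ).trace.re ≤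
      3 * (1 - ((ρ * P0).trace).re) := by
  have hI : ∀ X : Matrix (Fin N) (Fin N) ℂ, P0 * (P0 * X) = P0 * X := fun X => by
    rw [← mul_assoc, hIdem]
  have hP : P0ᴴ = P0 := hHerm
  have hR : ρᴴ = ρ := hρ.isHermitian
  have c1 : (P0 * (ρ * ρ)).trace = (ρ * (ρ * P0)).trace := by
    rw [Matrix.trace_mul_comm, mul_assoc]
  have c2 : (ρ * (P0 * ρ)).trace = (ρ * (ρ * P0)).trace := by
    rw [Matrix.trace_mul_comm, mul_assoc, c1]
  have c3 : (P0 * (ρ * (P0 * ρ))).trace = (ρ * (P0 * (ρ * P0))).trace := by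
    rw [Matrix.trace_mul_comm]; simp only [mul_assoc]
  have c4 : (P0 * (ρ * (P0 * (ρ * P0)))).trace = (ρ * (P0 * (ρ * P0))).trace := by
    rw [Matrix.trace_mul_comm]; simp only [mul_assoc, hIdem]
  have c5 : (P0 * (ρ * (ρ * P0))).trace = (ρ * (ρ * P0)).trace := by
    rw [Matrix.trace_mul_comm]; simp only [mul_assoc, hIdem]
  have e : ((ρ - P0 * ρ * P0) * (ρ - P0 * ρ * P0)ᴴ).trace
      + (((1 - P0) * ρ * (1 - P0)) * ((1 - P0) * ρ * (1 - P0))ᴴ).trace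
      = 2 * ((ρ * (1 - P0)) * (ρ * (1 - P0))ᴴ).trace := by
    simp only [conjTranspose_sub, conjTranspose_mul, hP, hR, conjTranspose_one, mul_sub, sub_mul,
      mul_one, one_mul, mul_assoc, hI, hIdem, trace_sub, c1, c2, c3, c4, c5]
    ring
  have e' := congrArg Complex.re e
  simp only [Complex.add_re, Complex.mul_re, Complex.re_ofNat, Complex.im_ofNat, zero_mul,
    sub_zero] at e'
  have n1 := frob_nonneg ((1 - P0) * ρ * (1 - P0))
  obtain ⟨B, hB⟩ : ∃ B : Matrix (Fin N) (Fin N) ℂ, ρ = Bᴴ * B := by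
    open scoped MatrixOrder in
    exact CStarAlgebra.nonneg_iff_eq_star_mul_self.mp hρ.nonneg
  have m := frob_mul Bᴴ (B * (1 - P0))
  rw [← mul_assoc, ← hB, conjTranspose_conjTranspose, ← hB, htr] at m
  have f : ((B * (1 - P0)) * (B * (1 - P0))ᴴ).trace = 1 - (ρ * P0).trace := by
    rw [Matrix.trace_mul_comm, ← htr]
    have : (B * (1 - P0))ᴴ * (B * (1 - P0)) = (1 - P0) * ρ * (1 - P0) := by
      rw [hB, conjTranspose_mul, conjTranspose_sub, hP, conjTranspose_one]
      simp only [mul_assoc]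
    rw [this, Matrix.trace_mul_comm, ← mul_assoc]
    have : (1 - P0) * (1 - P0) = 1 - P0 := by
      simp [mul_sub, sub_mul, hIdem]
    rw [this, Matrix.trace_mul_comm, mul_sub, mul_one, trace_sub]
  have n2 := frob_nonneg (B * (1 - P0))
  rw [f] at m n2
  simp only [Complex.one_re, Complex.sub_re, one_mul] at m n2
  linarith
end

section
/- Let Π₀ be an orthogonal-projection matrix on ℂ^N and Π₀^⊥ = I − Π₀. Let H be Hermitian with H Π₀ = Π₀ H; let L₁,…,L_m be matrices commuting with Π₀ and γ₁,…,γ_m ≥ 0; and let C₁,…,C_{m̄} be matrices satisfying Π₀^⊥ C_k Π₀ = 0 for all k and Σ_{k=1}^{m̄} (Π₀ C_k* Π₀)(Π₀ C_k Π₀^⊥) = 0. Then for any N×N matrix ρ with ρ = Π₀ ρ Π₀, the operator G := −i(Hρ − ρH) + Σ_k γ_k (L_k ρ L_k* − ½L_k*L_k ρ − ½ρ L_k*L_k) + Σ_k (C_k ρ C_k* − ½C_k*C_k ρ − ½ρ C_k*C_k) satisfies G = Π₀ G Π₀; moreover, for each k, Lρ + ρL* with L = L_k satisfies Π₀(L_kρ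 + ρL_k*)Π₀ = L_kρ + ρL_k*. -/
open Matrix

/-- Under assumptions A1 and A2, the target subspace remains invariant under both
the drift and the measurement back-action of the perturbed master equation. -/
theorem stmt16 {N m mbar : ℕ}
    (P0 : Matrix (Fin N) (Fin N) ℂ) (hHerm : P0.IsHermitian) (hIdem : P0 * P0 = P0)
    (H : Matrix (Fin N) (Fin N) ℂ) (hH : H.IsHermitian) (hHP : H * P0 = P0 * H)
    (L : Fin m → Matrix (Fin N) (Fin N) ℂ) (hLP : ∀ k, L k * P0 = P0 * L k)
    (γ : Fin m → ℝ) (hγ : ∀ k, 0 ≤ γ k)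
    (C : Fin mbar → Matrix (Fin N) (Fin N) ℂ)
    (hCQ : ∀ k, (1 - P0) * C k * P0 = 0)
    (hCS : ∑ k, (P0 * (C k)ᴴ * P0) * (P0 * C k * (1 - P0)) = 0)
    (ρ : Matrix (Fin N) (Fin N) ℂ) (hρ : ρ = P0 * ρ * P0)
    (G : Matrix (Fin N) (Fin N) ℂ)
    (hG : G = -Complex.I • (H * ρ - ρ * H)
      + ∑ k, (γ k : ℂ) •
          (L k * ρ * (L k)ᴴ - (1 / 2 : ℂ) • ((L k)ᴴ * L k * ρ)
            - (1 / 2 : ℂ) • (ρ * ((L k)ᴴ * L k)))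
      + ∑ k, (C k * ρ * (C k)ᴴ - (1 / 2 : ℂ) • ((C k)ᴴ * C k * ρ)
            - (1 / 2 : ℂ) • (ρ * ((C k)ᴴ * C k)))) :
    G = P0 * G * P0 ∧
      ∀ k, P0 * (L k * ρ + ρ * (L k)ᴴ) * P0 = L k * ρ + ρ * (L k)ᴴ := by
  have hPH : P0ᴴ = P0 := hHerm
  have hPr : P0 * ρ = ρ := by
    rw [hρ]; simp only [← mul_assoc, hIdem]
  have hrP : ρ * P0 = ρ := by
    rw [hρ]; simp only [mul_assoc, hIdem]
  let V : Submodule ℂ (Matrix (Fin N) (Fin N) ℂ) :=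
    { carrier := {X | P0 * X = X ∧ X * P0 = X}
      add_mem' := by
        rintro a b ⟨h1, h2⟩ ⟨h3, h4⟩
        exact ⟨by rw [mul_add, h1, h3], by rw [add_mul, h2, h4]⟩
      zero_mem' := ⟨mul_zero _, zero_mul _⟩
      smul_mem' := by
        rintro c a ⟨h1, h2⟩
        exact ⟨by rw [mul_smul_comm, h1], by rw [smul_mul_assoc, h2]⟩ }
  have hρV : ρ ∈ V := ⟨hPr, hrP⟩
  have hl : ∀ X Y, X ∈ V → Y * P0 = P0 * Y → Y * X ∈ V := by
    rintro X Y ⟨h1, h2⟩ h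
    exact ⟨by rw [← mul_assoc, ← h, mul_assoc, h1], by rw [mul_assoc, h2]⟩
  have hr : ∀ X Y, X ∈ V → Y * P0 = P0 * Y → X * Y ∈ V := by
    rintro X Y ⟨h1, h2⟩ h
    exact ⟨by rw [← mul_assoc, h1], by rw [mul_assoc, h, ← mul_assoc, h2]⟩
  have hV : ∀ X ∈ V, P0 * X * P0 = X := by
    rintro X ⟨h1, h2⟩
    rw [h1, h2]
  have hLs : ∀ k, (L k)ᴴ * P0 = P0 * (L k)ᴴ := by
    intro k
    have := congrArg conjTranspose (hLP k)
    rw [conjTranspose_mul, conjTranspose_mul, hPH] at this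
    exact this.symm
  have hLL : ∀ k, (L k)ᴴ * L k * P0 = P0 * ((L k)ᴴ * L k) := by
    intro k
    rw [mul_assoc, hLP, ← mul_assoc, hLs, mul_assoc]
  have hCP : ∀ k, P0 * C k * P0 = C k * P0 := by
    intro k
    have := hCQ k
    rw [sub_mul, sub_mul, one_mul, sub_eq_zero] at this
    exact this.symm
  have hCsP : ∀ k, P0 * (C k)ᴴ * P0 = P0 * (C k)ᴴ := by
    intro k
    have := congrArg conjTranspose (hCP k)
    simp only [conjTranspose_mul, hPH] at this
    rw [mul_assoc]; exact this
  have hA1 : P0 * (∑ k, (C k)ᴴ * C k) * P0 = P0 * (∑ k, (C k)ᴴ * C k) := by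
    have h : P0 * (∑ k, (C k)ᴴ * C k) * (1 - P0) = 0 := by
      rw [← hCS, Finset.mul_sum, Finset.sum_mul]
      refine Finset.sum_congr rfl fun k _ => ?_
      have : P0 * (C k)ᴴ * P0 * (P0 * C k * (1 - P0))
          = P0 * (C k)ᴴ * (P0 * P0) * (C k * (1 - P0)) := by
        simp only [mul_assoc]
      rw [this, hIdem, hCsP]
      simp only [mul_assoc]
    rw [mul_sub, mul_one, sub_eq_zero] at h
    exact h.symm
  have hA : (∑ k, (C k)ᴴ * C k) * P0 = P0 * (∑ k, (C k)ᴴ * C k) := by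
    have h := congrArg conjTranspose hA1
    simp only [conjTranspose_mul, conjTranspose_sum, hPH, conjTranspose_conjTranspose] at h
    rw [← h, ← mul_assoc, hA1]
  have hCr : ∀ k, C k * ρ * (C k)ᴴ ∈ V := by
    intro k
    have e1 : P0 * (C k * ρ) = C k * ρ := by
      calc P0 * (C k * ρ) = P0 * (C k * (P0 * ρ)) := by rw [hPr]
        _ = (P0 * C k * P0) * ρ := by simp only [mul_assoc]
        _ = C k * ρ := by rw [hCP, mul_assoc, hPr]
    have e2 : ρ * (C k)ᴴ * P0 = ρ * (C k)ᴴ := by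
      calc ρ * (C k)ᴴ * P0 = (ρ * P0) * (C k)ᴴ * P0 := by rw [hrP]
        _ = ρ * (P0 * (C k)ᴴ * P0) := by simp only [mul_assoc]
        _ = ρ * (C k)ᴴ := by rw [hCsP, ← mul_assoc, hrP]
    exact ⟨by rw [← mul_assoc, e1], by rw [mul_assoc (C k), mul_assoc (C k), e2]⟩
  refine ⟨?_, fun k => hV _ (V.add_mem (hl _ _ hρV (hLP k)) (hr _ _ hρV (hLs k)))⟩
  refine (hV G ?_).symm
  rw [hG]
  refine V.add_mem (V.add_mem ?_ ?_) ?_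
  · exact V.smul_mem _ (V.sub_mem (hl _ _ hρV hHP) (hr _ _ hρV hHP))
  · refine V.sum_mem fun k _ => V.smul_mem _ (V.sub_mem (V.sub_mem ?_ ?_) ?_)
    · exact hr _ _ (hl _ _ hρV (hLP k)) (hLs k)
    · exact V.smul_mem _ (hl _ _ hρV (hLL k))
    · exact V.smul_mem _ (hr _ _ hρV (hLL k))
  · rw [Finset.sum_sub_distrib, Finset.sum_sub_distrib, ← Finset.smul_sum, ← Finset.smul_sum,
      ← Finset.sum_mul, ← Finset.mul_sum]
    exact V.sub_mem (V.sub_mem (V.sum_mem fun k _ => hCr k) (V.smul_mem _ (hl _ _ hρV hA)))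
      (V.smul_mem _ (hr _ _ hρV hA))
end

section
/- Let d ≥ 1, m ≥ 1, and for each k ∈ {1,…,m} let l_{k,0},…,l_{k,d} ∈ ℝ. Assume (A5): for each k, either l_{k,0} ≤ l_{k,n} for all n ∈ {1,…,d}, or l_{k,0} ≥ l_{k,n} for all n ∈ {1,…,d}; and assume for every n ∈ {1,…,d} there exists k with l_{k,0} ≠ l_{k,n}. Then for every ζ ∈ (0,1] there exists δ > 0 such that every probability vector p ∈ ℝ^{d+1} with 1 − p₀ ≥ ζ satisfies max_{1≤k≤m} | l_{k,0} − Σ_{j=0}^d l_{k,j} p_j | ≥ δ. -/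
/-- Uniform separation of `Ψ^k₀` away from the vertex `e₀`: the compactness step
in the proof of Proposition 1 (Recurrence). -/
theorem stmt17 {d m : ℕ} (hd : 1 ≤ d) (hm : 1 ≤ m)
    (l : Fin m → Fin (d + 1) → ℝ)
    (hA5 : ∀ k, (∀ n : Fin d, l k 0 ≤ l k n.succ) ∨ (∀ n : Fin d, l k n.succ ≤ l k 0))
    (hA3 : ∀ n : Fin d, ∃ k, l k 0 ≠ l k n.succ) :
    ∀ ζ : ℝ, 0 < ζ → ζ ≤ 1 →
      ∃ δ > 0, ∀ p : Fin (d + 1) → ℝ, (∀ j, 0 ≤ p j) → (∑ j, p j = 1) →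
        ζ ≤ 1 - p 0 →
        δ ≤ ⨆ k : Fin m, |l k 0 - ∑ j, l k j * p j| := by
  intro ζ hζ _
  choose K hK using hA3
  haveI : Nonempty (Fin d) := ⟨⟨0, hd⟩⟩
  obtain ⟨n0, hn0⟩ := Finite.exists_min (fun n : Fin d => |l (K n) 0 - l (K n) n.succ|)
  have hdpos : (0 : ℝ) < d := by exact_mod_cast hd
  have hc : 0 < |l (K n0) 0 - l (K n0) n0.succ| := abs_pos.mpr (sub_ne_zero.mpr (hK n0))
  refine ⟨|l (K n0) 0 - l (K n0) n0.succ| * (ζ / d), mul_pos hc (div_pos hζ hdpos), ?_⟩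
  intro p hp hsum hz
  rw [Fin.sum_univ_succ] at hsum
  obtain ⟨n, hn⟩ : ∃ n : Fin d, ζ / d ≤ p n.succ := by
    by_contra! h
    have h1 : ∑ n : Fin d, p n.succ < ∑ _n : Fin d, ζ / d :=
      Finset.sum_lt_sum_of_nonempty Finset.univ_nonempty (fun i _ => h i)
    have h2 : ∑ _n : Fin d, ζ / d = ζ := by
      simp
      field_simp
    linarith
  have hpsi : ∀ k, l k 0 - ∑ j, l k j * p j
      = ∑ i : Fin d, (l k 0 - l k i.succ) * p i.succ := by
    intro k
    rw [Fin.sum_univ_succ]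
    simp only [sub_mul, Finset.sum_sub_distrib, ← Finset.mul_sum]
    linear_combination (-l k 0) * hsum
  have hle : |l (K n) 0 - l (K n) n.succ| * p n.succ
      ≤ |l (K n) 0 - ∑ j, l (K n) j * p j| := by
    rw [hpsi]
    rcases hA5 (K n) with h | h
    · have h3 : ∀ i ∈ Finset.univ, 0 ≤ (l (K n) i.succ - l (K n) 0) * p (Fin.succ i) :=
        fun i _ => mul_nonneg (sub_nonneg.mpr (h i)) (hp _)
      have h4 := Finset.single_le_sum h3 (Finset.mem_univ n)
      rw [abs_sub_comm, abs_of_nonneg (sub_nonneg.mpr (h n)), ← abs_neg,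
        ← Finset.sum_neg_distrib]
      simp only [← neg_mul, neg_sub]
      exact h4.trans (le_abs_self _)
    · have h3 : ∀ i ∈ Finset.univ, 0 ≤ (l (K n) 0 - l (K n) i.succ) * p (Fin.succ i) :=
        fun i _ => mul_nonneg (sub_nonneg.mpr (h i)) (hp _)
      have h4 := Finset.single_le_sum h3 (Finset.mem_univ n)
      rw [abs_of_nonneg (sub_nonneg.mpr (h n))]
      exact h4.trans (le_abs_self _)
  calc _ ≤ |l (K n) 0 - l (K n) n.succ| * p n.succ :=
        mul_le_mul (hn0 n) hn (div_pos hζ hdpos).le (abs_nonneg _)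
    _ ≤ _ := hle
    _ ≤ _ := le_ciSup (f := fun k => |l k 0 - ∑ j, l k j * p j|)
        (Set.finite_range _).bddAbove (K n)
end

section
/- Let Π₀,…,Π_d be pairwise orthogonal orthogonal-projection matrices on ℂ^N with Π₀+⋯+Π_d = I, let H₁ be Hermitian, let Π₀^⊥ = I − Π₀ and r = rank(Π₀), and set A := Π₀^⊥ H₁ Π₀^⊥, B := Π₀^⊥ H₁ Π₀. Suppose there exists n ∈ ℕ such that rank[B, AB, …, AⁿB] ≥ N − r. Then condition A6 holds: for every j ∈ {1,…,d}, every λ ∈ ℂ, and every vector v in the range of Π_j satisfying Π_j H₁ Π_j v = λ v and Π_i H₁ Π_j v = 0 for all i ≠ j, one has v = 0. -/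
open Matrix

/-- The Kalman-type condition A-ctrl implies the Hautus-type condition A6. -/
theorem stmt18 {N d n : ℕ} (P : Fin (d + 1) → Matrix (Fin N) (Fin N) ℂ)
    (hHerm : ∀ i, (P i).IsHermitian)
    (hIdem : ∀ i, P i * P i = P i)
    (hOrth : ∀ i j, i ≠ j → P i * P j = 0)
    (hSum : ∑ i, P i = 1)
    (H₁ : Matrix (Fin N) (Fin N) ℂ) (hH₁ : H₁.IsHermitian)
    (r : ℕ) (hr : (P 0).rank = r)
    (A B : Matrix (Fin N) (Fin N) ℂ)
    (hA : A = (1 - P 0) * H₁ * (1 - P 0))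
    (hB : B = (1 - P 0) * H₁ * P 0)
    (hrank : N - r ≤
      (Matrix.of fun (i : Fin N) (p : Fin (n + 1) × Fin N) =>
        (A ^ (p.1 : ℕ) * B) i p.2).rank) :
    ∀ j : Fin (d + 1), j ≠ 0 → ∀ (lam : ℂ) (v : Fin N → ℂ),
      (P j).mulVec v = v →
      (P j * H₁ * P j).mulVec v = lam • v →
      (∀ i, i ≠ j → (P i * H₁ * P j).mulVec v = 0) →
      v = 0 := by
  intro j hj lam v hv hlam hoff
  have hHv : H₁ *ᵥ v = lam • v := by
    have h1 : H₁ *ᵥ v = (∑ i, P i) *ᵥ (H₁ *ᵥ v) := by rw [hSum, Matrix.one_mulVec]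
    have h2 : ∀ i, P i *ᵥ (H₁ *ᵥ v) = (P i * H₁ * P j) *ᵥ v := by
      intro i
      rw [← Matrix.mulVec_mulVec, hv, Matrix.mulVec_mulVec]
    rw [h1, Matrix.sum_mulVec, Finset.sum_eq_single j]
    · rw [h2, hlam]
    · intro i _ hi
      rw [h2, hoff i hi]
    · simp
  have hP0v : P 0 *ᵥ v = 0 := by
    rw [← hv, Matrix.mulVec_mulVec, hOrth 0 j (Ne.symm hj), Matrix.zero_mulVec]
  have hsP : star v ᵥ* P 0 = 0 := by
    have := Matrix.star_mulVec (P 0) v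
    rw [hP0v, (hHerm 0).eq] at this
    rw [← this]; simp
  have hsH : star v ᵥ* H₁ = star lam • star v := by
    have := Matrix.star_mulVec H₁ v
    rw [hHv, hH₁.eq] at this
    rw [← this, star_smul]
  have hs1 : star v ᵥ* (1 - P 0) = star v := by
    rw [Matrix.vecMul_sub, hsP, Matrix.vecMul_one, sub_zero]
  have hsA : star v ᵥ* A = star lam • star v := by
    rw [hA, ← Matrix.vecMul_vecMul, ← Matrix.vecMul_vecMul, hs1, hsH, Matrix.smul_vecMul, hs1]
  have hsB : star v ᵥ* B = 0 := by
    rw [hB, ← Matrix.vecMul_vecMul, ← Matrix.vecMul_vecMul, hs1, hsH, Matrix.smul_vecMul, hsP,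
      smul_zero]
  have hsAB : ∀ k : ℕ, star v ᵥ* (A ^ k * B) = 0 := by
    intro k
    induction k with
    | zero => simpa using hsB
    | succ k ih =>
      rw [pow_succ', mul_assoc, ← Matrix.vecMul_vecMul, hsA, Matrix.smul_vecMul, ih, smul_zero]
  have hP1 : P 0 * (1 - P 0) = 0 := by rw [mul_sub, mul_one, hIdem, sub_self]
  have hPAB : ∀ k : ℕ, P 0 * (A ^ k * B) = 0 := by
    intro k
    cases k with
    | zero => rw [pow_zero, one_mul, hB, ← mul_assoc, ← mul_assoc, hP1, zero_mul, zero_mul]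
    | succ k =>
      have : P 0 * A = 0 := by rw [hA, ← mul_assoc, ← mul_assoc, hP1, zero_mul, zero_mul]
      rw [pow_succ', mul_assoc, ← mul_assoc, this, zero_mul]
  set K := (Matrix.of fun (i : Fin N) (p : Fin (n + 1) × Fin N) =>
        (A ^ (p.1 : ℕ) * B) i p.2) with hK
  have hPK : P 0 * K = 0 := by
    ext i p
    exact congrFun (congrFun (hPAB p.1) i) p.2
  have hsK : star v ᵥ* K = 0 := by
    ext p
    exact congrFun (hsAB p.1) p.2
  have hle : LinearMap.range K.mulVecLin ≤ LinearMap.ker (P 0).mulVecLin := by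
    rintro _ ⟨w, rfl⟩
    simp [Matrix.mulVec_mulVec, hPK]
  have hdim := LinearMap.finrank_range_add_finrank_ker (P 0).mulVecLin
  have hr' : Module.finrank ℂ (LinearMap.range (P 0).mulVecLin) = r := hr
  have hrank' : N - r ≤ Module.finrank ℂ (LinearMap.range K.mulVecLin) := hrank
  rw [Module.finrank_fin_fun] at hdim
  have heq := Submodule.eq_of_le_of_finrank_le hle (by omega)
  have hmem : v ∈ LinearMap.range K.mulVecLin := by
    rw [heq]; simpa using hP0v
  obtain ⟨w, hw⟩ := hmem
  have hw' : K *ᵥ w = v := hw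
  have h0 : star v ⬝ᵥ v = 0 := by
    conv_lhs => rw [← hw', Matrix.dotProduct_mulVec, hw', hsK]
    simp
  open scoped ComplexOrder in
  exact dotProduct_star_self_eq_zero.mp h0
end
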